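/- Let k ∈ ℕ₀ and n = 4k+2, and for even m let T_m(t) = Σ_{i=0}^{m/2} (-1)^i t^{2i}/(2i)!. Then for all t ∈ [−√((n+3)(n+4)), √((n+3)(n+4))] one has T_n(t) ≤ T_{n+4}(t) ≤ cos t. -/

import Mathlib

/-!
The difference of the two Maclaurin polynomials is
`t^(4k+4)/(4k+4)! - t^(4k+6)/(4k+6)! = t^(4k+4)/(4k+6)! * ((4k+5)(4k+6) - t^2)`,
which is nonnegative exactly on the stated interval (apart from `t = 0`). The upper bound by
`cos` holds on all of `ℝ`: the remainders of the Maclaurin polynomials of `cos` and `sin` are, up to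
sign, successive antiderivatives of one another vanishing at `0`, so starting from `cos t ≤ 1` the
sign of each one on `[0, ∞)` follows from the sign of the previous one (`taylor_remainder_sign`).
Both sides being even then settles negative `t`.
-/

open Finset

/-- Maclaurin polynomial of cos of even degree `m`:
`T m t = ∑_{i=0}^{m/2} (-1)^i t^(2i)/(2i)!`. -/
noncomputable def cosTaylor (m : ℕ) (t : ℝ) : ℝ :=
  ∑ i ∈ Finset.range (m / 2 + 1), (-1 : ℝ) ^ i * t ^ (2 * i) / (2 * i).factorial

/-- The sum of the first `m` nonzero terms of the Maclaurin series of `cos`. -/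
noncomputable def cosSum (m : ℕ) (t : ℝ) : ℝ :=
  ∑ i ∈ Finset.range m, (-1 : ℝ) ^ i * t ^ (2 * i) / (2 * i).factorial

/-- The sum of the first `m` nonzero terms of the Maclaurin series of `sin`. -/
noncomputable def sinSum (m : ℕ) (t : ℝ) : ℝ :=
  ∑ i ∈ Finset.range m, (-1 : ℝ) ^ i * t ^ (2 * i + 1) / (2 * i + 1).factorial

lemma hasDerivAt_sinSum (m : ℕ) (t : ℝ) : HasDerivAt (sinSum m) (cosSum m t) t := by
  unfold sinSum cosSum
  refine HasDerivAt.fun_sum fun i _ => ?_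
  refine (((hasDerivAt_pow (2 * i + 1) t).const_mul ((-1 : ℝ) ^ i)).div_const _).congr_deriv ?_
  rw [Nat.factorial_succ]
  have : ((2 * i).factorial : ℝ) ≠ 0 := by positivity
  push_cast
  field_simp

lemma hasDerivAt_cosSum_succ (m : ℕ) (t : ℝ) : HasDerivAt (cosSum (m + 1)) (-sinSum m t) t := by
  have h : cosSum (m + 1) = fun t => (∑ i ∈ Finset.range m,
      (-1 : ℝ) ^ (i + 1) * t ^ (2 * i + 2) / (2 * i + 2).factorial) + 1 := by
    funext t
    simp [cosSum, Finset.sum_range_succ', mul_add]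
  rw [h, sinSum, ← Finset.sum_neg_distrib]
  refine (HasDerivAt.fun_sum fun i _ => ?_).add_const _
  refine (((hasDerivAt_pow (2 * i + 2) t).const_mul ((-1 : ℝ) ^ (i + 1))).div_const _).congr_deriv ?_
  rw [Nat.factorial_succ (2 * i + 1)]
  have : ((2 * i + 1).factorial : ℝ) ≠ 0 := by positivity
  push_cast
  field_simp
  ring

lemma nonneg_of_hasDerivAt_nonneg {f f' : ℝ → ℝ} (hf : ∀ t, HasDerivAt f (f' t) t)
    (h0 : f 0 = 0) (hf' : ∀ t, 0 ≤ t → 0 ≤ f' t) (t : ℝ) (ht : 0 ≤ t) : 0 ≤ f t := by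
  have hmono : MonotoneOn f (Set.Ici 0) := by
    refine monotoneOn_of_hasDerivWithinAt_nonneg (convex_Ici 0)
      (fun x _ => (hf x).continuousAt.continuousWithinAt)
      (fun x _ => (hf x).hasDerivWithinAt) fun x hx => hf' x ?_
    rw [interior_Ici] at hx
    exact le_of_lt hx
  simpa [h0] using hmono (Set.mem_Ici.2 le_rfl) ht ht

lemma sinSum_zero (m : ℕ) : sinSum m 0 = 0 := by simp [sinSum]

lemma cosSum_succ_zero (m : ℕ) : cosSum (m + 1) 0 = 1 := by
  simp [cosSum, Finset.sum_range_succ']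

lemma sin_remainder_sign (m : ℕ)
    (h : ∀ t : ℝ, 0 ≤ t → 0 ≤ (-1 : ℝ) ^ m * (Real.cos t - cosSum m t)) :
    ∀ t : ℝ, 0 ≤ t → 0 ≤ (-1 : ℝ) ^ m * (Real.sin t - sinSum m t) :=
  nonneg_of_hasDerivAt_nonneg
    (fun t => ((Real.hasDerivAt_sin t).sub (hasDerivAt_sinSum m t)).const_mul _)
    (by simp [sinSum_zero]) h

/-- The remainder of `cos` after `m + 1` terms has the sign of the first omitted term. At least one
term is needed, since `cos` itself changes sign. -/
lemma taylor_remainder_sign (m : ℕ) :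
    ∀ t : ℝ, 0 ≤ t → 0 ≤ (-1 : ℝ) ^ (m + 1) * (Real.cos t - cosSum (m + 1) t) := by
  induction m with
  | zero =>
    intro t _
    simp [cosSum, Real.cos_le_one]
  | succ m ih =>
    refine nonneg_of_hasDerivAt_nonneg
      (fun t => ((Real.hasDerivAt_cos t).sub (hasDerivAt_cosSum_succ (m + 1) t)).const_mul _)
      (by simp [cosSum_succ_zero]) fun t ht => ?_
    have := sin_remainder_sign (m + 1) ih t ht
    rw [pow_succ]
    linarith

lemma cosSum_abs (m : ℕ) (t : ℝ) : cosSum m |t| = cosSum m t := by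
  simp [cosSum, pow_mul]

theorem stmt_3 (k : ℕ) (n : ℕ) (hn : n = 4 * k + 2) :
    ∀ t ∈ Set.Icc (-Real.sqrt (((n : ℝ) + 3) * ((n : ℝ) + 4)))
        (Real.sqrt (((n : ℝ) + 3) * ((n : ℝ) + 4))),
      cosTaylor n t ≤ cosTaylor (n + 4) t ∧ cosTaylor (n + 4) t ≤ Real.cos t := by
  intro t ht
  subst hn
  have h1 : (4 * k + 2) / 2 + 1 = 2 * k + 2 := by omega
  have h2 : (4 * k + 2 + 4) / 2 + 1 = 2 * k + 2 + 1 + 1 := by omega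
  constructor
  · have hsq : t ^ 2 ≤ (4 * (k : ℝ) + 5) * (4 * k + 6) := by
      have := Real.sq_le (by positivity) |>.2 ht
      push_cast at this
      linarith
    rw [cosTaylor, cosTaylor, h1, h2, Finset.sum_range_succ _ (2 * k + 2 + 1),
      Finset.sum_range_succ _ (2 * k + 2)]
    have hs : (-1 : ℝ) ^ (2 * k + 2) = 1 := Even.neg_one_pow ⟨k + 1, by ring⟩
    have e1 : 2 * (2 * k + 2) = 4 * k + 4 := by ring
    have e2 : 2 * (2 * k + 2 + 1) = 4 * k + 4 + 1 + 1 := by ring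
    have key : t ^ (4 * k + 4) / (4 * k + 4).factorial
        - t ^ (4 * k + 4 + 1 + 1) / (4 * k + 4 + 1 + 1).factorial
        = t ^ (4 * k + 4) * ((4 * (k : ℝ) + 5) * (4 * k + 6) - t ^ 2)
          / (4 * k + 4 + 1 + 1).factorial := by
      rw [Nat.factorial_succ (4 * k + 4 + 1), Nat.factorial_succ (4 * k + 4)]
      have : ((4 * k + 4).factorial : ℝ) ≠ 0 := by positivity
      push_cast
      field_simp
      ring
    have hnn : 0 ≤ t ^ (4 * k + 4) * ((4 * (k : ℝ) + 5) * (4 * k + 6) - t ^ 2)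
          / (4 * k + 4 + 1 + 1).factorial :=
      div_nonneg (mul_nonneg (Even.pow_nonneg ⟨2 * k + 2, by ring⟩ t) (by linarith))
        (by positivity)
    rw [pow_succ (-1 : ℝ) (2 * k + 2), hs, e1, e2]
    rw [← key] at hnn
    simp only [one_mul, neg_mul, neg_div]
    linarith
  · have h := taylor_remainder_sign (2 * k + 2 + 1) |t| (abs_nonneg t)
    rw [Real.cos_abs, cosSum_abs, Even.neg_one_pow ⟨k + 2, by ring⟩, one_mul] at h
    rw [cosTaylor, h2]
    exact sub_nonneg.1 h
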